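/- Suppose that for each integer n ≥ 2, H_n is a real-valued function on the set of probability vectors (p_1,…,p_n) (p_i ≥ 0, Σ_i p_i = 1), and that: (i) each H_n is invariant under permutations of its arguments; (ii) the function p ↦ H_2(p, 1−p) is continuous on [0,1]; (iii) H_2(p₀, 1−p₀) > 0 for at least one p₀ ∈ [0,1]; (iv) (Faddeev grouping axiom) for every n ≥ 2 and every probability vector (p_1,…,p_{n−1}, q_1, q_2) of length n+1 with p_n := q_1 + q_2 > 0, one has H_{n+1}(p_1,…,p_{n−1},q_1,q_2) = H_n(p_1,…,p_{n−1},p_n) + p_n · H_2(q_1/p_n, q_2/p_n). Then there exists a constant K > 0 such that H_n(p_1,…,p_n) = −K · Σ_{i=1}^n p_i log₂ p_i for every n ≥ 2 and every probability vector (Faddeev's uniqueness theorem for the Shannon information). -/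

import Mathlib

noncomputable section

/-- A probability vector: nonnegative entries summing to one. -/
def IsProbVec {n : ℕ} (p : Fin n → ℝ) : Prop :=
  (∀ i, 0 ≤ p i) ∧ ∑ i, p i = 1

/-!
Subtracting `H₂(1/2, 1/2)` times the entropy reduces the theorem to the case `H₂(1/2, 1/2) = 0`,
where `H` has to vanish. Grouping the three outcomes of `H₃` in two ways says that
`f x y = (x + y) h (x / (x + y))`, with `h x = H₂(x, 1 - x)`, is a 2-cocycle on the positive reals.
On the positive integers it is the coboundary of `L n = ∑_{1 ≤ k < n} f k 1`, and homogeneity of `f`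
makes `g n = L n / n` (which is `Hₙ(1/n, …, 1/n)`) additive:
`g (m n) = g m + g n`. Since `g 2 = 0` and `g (n + 1) - n / (n + 1) * g n = h (n / (n + 1)) → 0`,
halving `n` repeatedly gives `g n = o(log n)`, which forces `g = 0`. Hence `h` vanishes at the
rationals and, by continuity, everywhere; grouping then carries this over to every `Hₙ`.
-/

open Asymptotics Filter Real Set Topology

section AdditiveFunctions

lemma exists_forall_le_add_mul_log {b : ℕ} (hb : 1 < b) {u : ℕ → ℝ} {ε : ℝ}
    (hu : ∀ᶠ n in atTop, u n ≤ u (n / b) + ε) : ∃ C, ∀ n, u n ≤ C + ε * Nat.log b n := by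
  obtain ⟨N, hN⟩ := eventually_atTop.1 hu
  obtain ⟨C, hC⟩ := ((finite_lt_nat (max N b)).image fun n ↦ u n - ε * Nat.log b n).bddAbove
  refine ⟨C, fun n ↦ ?_⟩
  induction n using Nat.strong_induction_on with
  | _ n ih =>
    by_cases hn : n < max N b
    · linarith [hC (mem_image_of_mem _ hn)]
    · have hNn : N ≤ n := by omega
      have hbn : b ≤ n := by omega
      have hlog : Nat.log b n = Nat.log b (n / b) + 1 := Nat.log_of_one_lt_of_le hb hbn
      have hdiv := ih (n / b) (Nat.div_lt_self (by omega) hb)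
      rw [hlog, Nat.cast_add_one]
      linarith [hN n hNn]

lemma isLittleO_log_of_abs_le_abs_div_add {b : ℕ} (hb : 1 < b) {u : ℕ → ℝ}
    (hu : ∀ ε > 0, ∀ᶠ n in atTop, |u n| ≤ |u (n / b)| + ε) :
    u =o[atTop] fun n : ℕ ↦ log n := by
  have hlogb : 0 < log b := log_pos (by exact_mod_cast hb)
  refine isLittleO_iff.2 fun c hc ↦ ?_
  obtain ⟨C, hC⟩ := exists_forall_le_add_mul_log hb (hu (c / 2 * log b) (by positivity))
  have hCn : ∀ᶠ n : ℕ in atTop, C / (c / 2) ≤ log n :=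
    (tendsto_log_atTop.comp tendsto_natCast_atTop_atTop).eventually_ge_atTop _
  filter_upwards [hCn] with n hn
  rw [norm_eq_abs, norm_eq_abs, abs_of_nonneg (log_natCast_nonneg n)]
  calc |u n| ≤ C + c / 2 * log b * Nat.log b n := hC n
    _ ≤ C + c / 2 * log b * logb b n := by gcongr; exact natLog_le_logb n b
    _ = C + c / 2 * log n := by rw [← log_div_log]; field_simp
    _ ≤ c * log n := by linarith [(div_le_iff₀' (half_pos hc)).1 hn]

variable {g : ℕ → ℝ} (hmul : ∀ m n, 0 < m → 0 < n → g (m * n) = g m + g n)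
include hmul

lemma map_pow_of_map_mul {n : ℕ} (hn : 0 < n) (k : ℕ) : g (n ^ k) = k * g n := by
  induction k with
  | zero => simpa using hmul 1 1 one_pos one_pos
  | succ k ih =>
    rw [pow_succ, hmul _ _ (by positivity) hn, ih]
    push_cast
    ring

lemma eq_zero_of_map_mul_of_isLittleO_log (hg : g =o[atTop] fun n : ℕ ↦ log n) {n : ℕ}
    (hn : 0 < n) : g n = 0 := by
  obtain rfl | hn1 : n = 1 ∨ 1 < n := by omega
  · simpa using hmul 1 1 one_pos one_pos
  have hlog : log n ≠ 0 := (log_pos (by exact_mod_cast hn1)).ne'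
  have hpow : Tendsto (fun k ↦ g (n ^ k) / log (n ^ k : ℕ)) atTop (𝓝 0) :=
    hg.tendsto_div_nhds_zero.comp (tendsto_pow_atTop_atTop_of_one_lt hn1)
  have hconst : (fun k ↦ g (n ^ k) / log (n ^ k : ℕ)) =ᶠ[atTop] fun _ ↦ g n / log n := by
    filter_upwards [eventually_gt_atTop 0] with k hk
    rw [map_pow_of_map_mul hmul hn, Nat.cast_pow, log_pow, mul_div_mul_left _ _ (by positivity)]
  simpa [hlog] using tendsto_nhds_unique (tendsto_const_nhds.congr' hconst.symm) hpow

lemma eq_zero_of_map_mul_of_tendsto (h2 : g 2 = 0)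
    (hlim : Tendsto (fun n : ℕ ↦ g (n + 1) - n / (n + 1) * g n) atTop (𝓝 0)) {n : ℕ}
    (hn : 0 < n) : g n = 0 := by
  refine eq_zero_of_map_mul_of_isLittleO_log hmul
    (isLittleO_log_of_abs_le_abs_div_add one_lt_two fun ε hε ↦ ?_) hn
  obtain ⟨N, hN⟩ := Metric.tendsto_atTop.1 hlim ε hε
  filter_upwards [eventually_ge_atTop (N + 2)] with n hn
  have hdouble (j : ℕ) (hj : 0 < j) : g (2 * j) = g j := by rw [hmul 2 j two_pos hj, h2, zero_add]
  obtain ⟨j, rfl | rfl⟩ := n.even_or_odd'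
  · rw [hdouble j (by omega), Nat.mul_div_cancel_left j two_pos]
    linarith
  · rw [show (2 * j + 1) / 2 = j by omega]
    have hdist := hN (2 * j) (by omega)
    rw [dist_zero_right, norm_eq_abs, hdouble j (by omega)] at hdist
    set t : ℝ := ((2 * j : ℕ) : ℝ) / ((2 * j : ℕ) + 1)
    have ht0 : 0 ≤ t := by positivity
    have ht1 : t ≤ 1 := div_le_one_of_le₀ (by linarith) (by positivity)
    calc |g (2 * j + 1)| = |t * g j + (g (2 * j + 1) - t * g j)| := by rw [add_sub_cancel]
      _ ≤ |t * g j| + |g (2 * j + 1) - t * g j| := abs_add_le _ _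
      _ ≤ |g j| + ε := by
        rw [abs_mul, abs_of_nonneg ht0]
        exact add_le_add (mul_le_of_le_one_left (abs_nonneg _) ht1) hdist.le

end AdditiveFunctions

section Cocycles

variable {M : Type*} [AddCommMonoid M]

/-- The function on the positive integers that vanishes at `1` and whose coboundary is `f`, if `f`
is a 2-cocycle (`cocyclePrimitive_add`). -/
def cocyclePrimitive (f : ℕ → ℕ → M) (n : ℕ) : M :=
  ∑ k ∈ Finset.Ico 1 n, f k 1

lemma cocyclePrimitive_one (f : ℕ → ℕ → M) : cocyclePrimitive f 1 = 0 := by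
  simp [cocyclePrimitive]

lemma cocyclePrimitive_succ (f : ℕ → ℕ → M) {n : ℕ} (hn : 0 < n) :
    cocyclePrimitive f (n + 1) = cocyclePrimitive f n + f n 1 :=
  Finset.sum_Ico_succ_top hn _

variable {f : ℕ → ℕ → M}
  (hcocycle : ∀ l m n, 0 < l → 0 < m → 0 < n → f l m + f (l + m) n = f l (m + n) + f m n)
include hcocycle

lemma cocyclePrimitive_add {m n : ℕ} (hm : 0 < m) (hn : 0 < n) :
    cocyclePrimitive f (m + n) = cocyclePrimitive f m + cocyclePrimitive f n + f m n := by
  induction n, hn using Nat.le_induction with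
  | base => simp [cocyclePrimitive_succ f hm, cocyclePrimitive_one]
  | succ n hn ih =>
    calc cocyclePrimitive f (m + n + 1)
      _ = cocyclePrimitive f m + cocyclePrimitive f n + (f m n + f (m + n) 1) := by
        rw [cocyclePrimitive_succ f (by omega), ih, add_assoc]
      _ = cocyclePrimitive f m + cocyclePrimitive f n + (f m (n + 1) + f n 1) := by
        rw [hcocycle m n 1 hm hn one_pos]
      _ = cocyclePrimitive f m + cocyclePrimitive f (n + 1) + f m (n + 1) := by
        rw [cocyclePrimitive_succ f hn]
        abel

lemma cocyclePrimitive_mul (hhom : ∀ k m n, 0 < k → f (k * m) (k * n) = k • f m n) {m n : ℕ}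
    (hm : 0 < m) (hn : 0 < n) :
    cocyclePrimitive f (m * n) = m • cocyclePrimitive f n + n • cocyclePrimitive f m := by
  induction n, hn using Nat.le_induction with
  | base => simp [cocyclePrimitive_one]
  | succ n hn ih =>
    have hf : f (m * n) m = m • f n 1 := by simpa using hhom m n 1 hm
    rw [mul_add_one, cocyclePrimitive_add hcocycle (by positivity) hm, ih, hf,
      cocyclePrimitive_succ f hn, smul_add, succ_nsmul]
    abel

end Cocycles

section Perspective

/-- The perspective of a function of one variable: its positively homogeneous extension to pairs.
If `h` gives the information of a two-outcome experiment, this is the information of two outcomes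
with unnormalized weights `x` and `y`. -/
def perspective (h : ℝ → ℝ) (x y : ℝ) : ℝ :=
  (x + y) * h (x / (x + y))

lemma perspective_mul (h : ℝ → ℝ) {k : ℝ} (hk : k ≠ 0) (x y : ℝ) :
    perspective h (k * x) (k * y) = k * perspective h x y := by
  rw [perspective, perspective, ← mul_add, mul_div_mul_left _ _ hk, mul_assoc]

variable {h : ℝ → ℝ}

lemma perspective_eq_zero_iff {x y : ℝ} (hxy : x + y ≠ 0) :
    perspective h x y = 0 ↔ h (x / (x + y)) = 0 :=
  mul_eq_zero_iff_left hxy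

lemma eqOn_zero_of_forall_nat (hcont : ContinuousOn h (Icc 0 1))
    (hnat : ∀ m n : ℕ, 0 < m → 0 < n → h (m / (m + n)) = 0) : EqOn h 0 (Icc 0 1) := by
  have hdense : Icc (0 : ℝ) 1 ⊆ closure (Ioo 0 1 ∩ range ((↑) : ℚ → ℝ)) := by
    rw [← closure_Ioo zero_ne_one]
    exact closure_minimal (Rat.denseRange_cast.open_subset_closure_inter isOpen_Ioo)
      isClosed_closure
  refine EqOn.of_subset_closure ?_ hcont continuousOn_const
    (inter_subset_left.trans Ioo_subset_Icc_self) hdense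
  rintro _ ⟨⟨hq0, hq1⟩, q, rfl⟩
  have hq0 : 0 < q := by exact_mod_cast hq0
  have hnum : 0 < q.num := Rat.num_pos.2 hq0
  have hlt : q.num < q.den := Rat.num_lt_denom_iff.2 (by exact_mod_cast hq1)
  obtain ⟨m, hm⟩ := Int.eq_ofNat_of_zero_le hnum.le
  obtain ⟨n, hn⟩ := Nat.exists_eq_add_of_lt (show m < q.den by omega)
  have hq : (q : ℝ) = m / (m + (n + 1 : ℕ)) := by
    rw [Rat.cast_def, hm, hn]
    push_cast
    ring
  rw [hq]
  exact hnat m (n + 1) (by omega) n.succ_pos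

variable (hcocycle : ∀ l m n : ℕ, 0 < l → 0 < m → 0 < n →
  perspective h l m + perspective h (l + m) n = perspective h l (m + n) + perspective h m n)
include hcocycle

lemma cocyclePrimitive_perspective_eq_zero (hcont : ContinuousWithinAt h (Icc 0 1) 1)
    (h1 : h 1 = 0) (hhalf : h (1 / 2) = 0) {n : ℕ} (hn : 0 < n) :
    cocyclePrimitive (fun m n : ℕ ↦ perspective h m n) n = 0 := by
  set L := cocyclePrimitive fun m n : ℕ ↦ perspective h m n
  have hLsucc (n : ℕ) (hn : 0 < n) : L (n + 1) = L n + perspective h n 1 := by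
    exact_mod_cast cocyclePrimitive_succ (fun m n : ℕ ↦ perspective h m n) hn
  have hLmul (m n : ℕ) (hm : 0 < m) (hn : 0 < n) : L (m * n) = m * L n + n * L m := by
    simpa using cocyclePrimitive_mul (f := fun m n : ℕ ↦ perspective h m n)
      (fun l m n hl hm hn ↦ by simpa using hcocycle l m n hl hm hn)
      (fun k m n hk ↦ by simpa using perspective_mul h (k := k) (by positivity) m n) hm hn
  suffices hg : L n / n = 0 by simpa [hn.ne'] using hg
  refine eq_zero_of_map_mul_of_tendsto (g := fun n ↦ L n / n) (fun m n hm hn ↦ ?_) ?_ ?_ hn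
  · rw [hLmul m n hm hn]
    push_cast
    field_simp
    ring
  · have hL1 : L 1 = 0 := cocyclePrimitive_one _
    have hL2 : L 2 = 0 := by
      simpa [perspective, hL1, one_add_one_eq_two, ← one_div, hhalf] using hLsucc 1 one_pos
    simp [hL2]
  · have hto : Tendsto (fun n : ℕ ↦ (n : ℝ) / (n + 1)) atTop (𝓝[Icc 0 1] 1) :=
      tendsto_nhdsWithin_iff.2 ⟨tendsto_natCast_div_add_atTop 1, .of_forall fun n ↦
        ⟨by positivity, div_le_one_of_le₀ (by linarith) (by positivity)⟩⟩
    refine (h1 ▸ hcont.tendsto.comp hto).congr' ?_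
    filter_upwards [eventually_gt_atTop 0] with n hn
    rw [Function.comp_apply, hLsucc n hn, perspective]
    push_cast
    field_simp
    ring

theorem eqOn_zero_of_perspective_cocycle (hcont : ContinuousOn h (Icc 0 1)) (h1 : h 1 = 0)
    (hhalf : h (1 / 2) = 0) : EqOn h 0 (Icc 0 1) := by
  refine eqOn_zero_of_forall_nat hcont fun m n hm hn ↦ ?_
  have hmn : (m + n : ℝ) ≠ 0 := by positivity
  have hadd := cocyclePrimitive_add (f := fun m n : ℕ ↦ perspective h m n)
    (fun l m n hl hm hn ↦ by simpa using hcocycle l m n hl hm hn) hm hn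
  have hzero {k : ℕ} (hk : 0 < k) :=
    cocyclePrimitive_perspective_eq_zero hcocycle (hcont 1 (by simp)) h1 hhalf hk
  rw [← perspective_eq_zero_iff hmn]
  simpa [hzero hm, hzero hn, hzero (Nat.add_pos_left hm n)] using hadd.symm

end Perspective

section ProbVec

lemma isProbVec_pair {a b : ℝ} (ha : 0 ≤ a) (hb : 0 ≤ b) (hab : a + b = 1) :
    IsProbVec ![a, b] :=
  ⟨by simp [Fin.forall_fin_two, ha, hb], by simp [hab]⟩

lemma isProbVec_triple {a b c : ℝ} (ha : 0 ≤ a) (hb : 0 ≤ b) (hc : 0 ≤ c)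
    (habc : a + b + c = 1) : IsProbVec ![a, b, c] :=
  ⟨by simp [Fin.forall_fin_succ, ha, hb, hc], by simp [Fin.sum_univ_three, habc]⟩

lemma isProbVec_snoc_iff {n : ℕ} {p : Fin n → ℝ} {q : ℝ} :
    IsProbVec (Fin.snoc p q : Fin (n + 1) → ℝ) ↔ (∀ i, 0 ≤ p i) ∧ 0 ≤ q ∧ ∑ i, p i + q = 1 := by
  simp [IsProbVec, Fin.forall_fin_succ', Fin.sum_snoc, and_assoc]

lemma isProbVec_snoc_snoc_iff {n : ℕ} {r : Fin n → ℝ} {a b : ℝ} :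
    IsProbVec (Fin.snoc (Fin.snoc r a) b : Fin (n + 2) → ℝ) ↔
      (∀ i, 0 ≤ r i) ∧ 0 ≤ a ∧ 0 ≤ b ∧ ∑ i, r i + a + b = 1 := by
  simp [isProbVec_snoc_iff, Fin.forall_fin_succ', Fin.sum_snoc, and_assoc]

lemma isProbVec_snoc_add {n : ℕ} {r : Fin n → ℝ} {a b : ℝ}
    (h : IsProbVec (Fin.snoc (Fin.snoc r a) b : Fin (n + 2) → ℝ)) :
    IsProbVec (Fin.snoc r (a + b) : Fin (n + 1) → ℝ) := by
  obtain ⟨hr, ha, hb, hsum⟩ := isProbVec_snoc_snoc_iff.1 h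
  exact isProbVec_snoc_iff.2 ⟨hr, add_nonneg ha hb, by rwa [← add_assoc]⟩

variable {n : ℕ} {p : Fin n → ℝ}

lemma IsProbVec.comp_perm (hp : IsProbVec p) (σ : Equiv.Perm (Fin n)) : IsProbVec (p ∘ σ) :=
  ⟨fun i ↦ hp.1 (σ i), (Equiv.sum_comp σ p).trans hp.2⟩

lemma IsProbVec.le_one (hp : IsProbVec p) (i : Fin n) : p i ≤ 1 :=
  hp.2 ▸ Finset.single_le_sum (fun j _ ↦ hp.1 j) (Finset.mem_univ i)

lemma IsProbVec.exists_pos (hp : IsProbVec p) : ∃ i, 0 < p i := by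
  by_contra! hnonpos
  linarith [hp.2, Finset.sum_nonpos fun i (_ : i ∈ Finset.univ) ↦ hnonpos i]

end ProbVec

/-- The information `x ↦ H₂(x, 1 - x)` of an experiment with two outcomes, as a function of the
probability of the first. -/
def informationFunction (H : ∀ n : ℕ, (Fin n → ℝ) → ℝ) (x : ℝ) : ℝ :=
  H 2 ![x, 1 - x]

lemma perspective_informationFunction (H : ∀ n : ℕ, (Fin n → ℝ) → ℝ) {x y : ℝ}
    (hxy : x + y ≠ 0) :
    perspective (informationFunction H) x y = (x + y) * H 2 ![x / (x + y), y / (x + y)] := by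
  rw [perspective, informationFunction, one_sub_div hxy, add_sub_cancel_left]

/-- A family of functions on probability vectors satisfying Faddeev's axioms for an information
measure, apart from positivity. In `grouping` there are `m + 1` outcomes besides the two grouped
ones, so that the grouped vector has at least two entries. -/
structure IsFaddeev (H : ∀ n : ℕ, (Fin n → ℝ) → ℝ) : Prop where
  comp_perm : ∀ n, 2 ≤ n → ∀ σ : Equiv.Perm (Fin n), ∀ p : Fin n → ℝ,
    IsProbVec p → H n (p ∘ σ) = H n p
  continuousOn : ContinuousOn (informationFunction H) (Icc 0 1)
  grouping : ∀ (m : ℕ) (p : Fin (m + 1) → ℝ) (q₁ q₂ : ℝ),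
    (∀ i, 0 ≤ p i) → 0 ≤ q₁ → 0 ≤ q₂ → (∑ i, p i) + q₁ + q₂ = 1 → 0 < q₁ + q₂ →
    H (m + 3) (Fin.snoc (Fin.snoc p q₁) q₂)
      = H (m + 2) (Fin.snoc p (q₁ + q₂))
        + (q₁ + q₂) * H 2 ![q₁ / (q₁ + q₂), q₂ / (q₁ + q₂)]

section ShannonEntropy

/-- The Shannon entropy in bits; the junk value `logb 2 0 = 0` gives the convention
`0 · log₂ 0 = 0`. -/
def shannonEntropy (n : ℕ) (p : Fin n → ℝ) : ℝ :=
  -∑ i, p i * logb 2 (p i)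

lemma shannonEntropy_eq_sum_negMulLog {n : ℕ} (p : Fin n → ℝ) :
    shannonEntropy n p = (∑ i, negMulLog (p i)) / log 2 := by
  simp only [shannonEntropy, negMulLog, logb, Finset.sum_div, ← Finset.sum_neg_distrib,
    neg_mul, neg_div, mul_div_assoc]

lemma informationFunction_shannonEntropy :
    informationFunction shannonEntropy = fun x ↦ binEntropy x / log 2 := by
  ext x
  simp [informationFunction, shannonEntropy_eq_sum_negMulLog,
    binEntropy_eq_negMulLog_add_negMulLog_one_sub]

lemma shannonEntropy_half_half : shannonEntropy 2 ![1 / 2, 1 / 2] = 1 := by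
  have hlogb : logb 2 (1 / 2) = -1 := by rw [one_div, logb_inv, logb_self_eq_one one_lt_two]
  simp only [shannonEntropy, Fin.sum_univ_two, Matrix.cons_val_zero, Matrix.cons_val_one, hlogb]
  norm_num

lemma shannonEntropy_nonneg {n : ℕ} {p : Fin n → ℝ} (hp : IsProbVec p) :
    0 ≤ shannonEntropy n p := by
  rw [shannonEntropy_eq_sum_negMulLog]
  exact div_nonneg (Finset.sum_nonneg fun i _ ↦ negMulLog_nonneg (hp.1 i) (hp.le_one i))
    (log_nonneg one_le_two)

lemma shannonEntropy_comp_perm {n : ℕ} (p : Fin n → ℝ) (σ : Equiv.Perm (Fin n)) :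
    shannonEntropy n (p ∘ σ) = shannonEntropy n p :=
  congrArg Neg.neg (Equiv.sum_comp σ fun i ↦ p i * logb 2 (p i))

lemma negMulLog_add_negMulLog {a b : ℝ} (hab : a + b ≠ 0) :
    negMulLog a + negMulLog b
      = negMulLog (a + b) + (a + b) * (negMulLog (a / (a + b)) + negMulLog (b / (a + b))) := by
  have ha := negMulLog_mul (a + b) (a / (a + b))
  have hb := negMulLog_mul (a + b) (b / (a + b))
  rw [mul_div_cancel₀ _ hab] at ha hb
  have hone : a / (a + b) + b / (a + b) = 1 := by rw [← add_div, div_self hab]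
  linear_combination ha + hb + negMulLog (a + b) * hone

lemma shannonEntropy_snoc_snoc {n : ℕ} (p : Fin n → ℝ) {a b : ℝ} (hab : a + b ≠ 0) :
    shannonEntropy (n + 2) (Fin.snoc (Fin.snoc p a) b)
      = shannonEntropy (n + 1) (Fin.snoc p (a + b))
        + (a + b) * shannonEntropy 2 ![a / (a + b), b / (a + b)] := by
  simp only [shannonEntropy_eq_sum_negMulLog, Fin.sum_univ_castSucc (n := n + 1),
    Fin.sum_univ_castSucc (n := n), Fin.snoc_castSucc, Fin.snoc_last, Fin.sum_univ_two,
    Matrix.cons_val_zero, Matrix.cons_val_one]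
  linear_combination negMulLog_add_negMulLog hab / log 2

lemma isFaddeev_shannonEntropy : IsFaddeev shannonEntropy where
  comp_perm _ _ σ p _ := shannonEntropy_comp_perm p σ
  continuousOn := by
    rw [informationFunction_shannonEntropy]
    exact (binEntropy_continuous.div_const _).continuousOn
  grouping _ p _ _ _ _ _ _ hq := shannonEntropy_snoc_snoc p hq.ne'

end ShannonEntropy

namespace IsFaddeev

variable {H G : ∀ n : ℕ, (Fin n → ℝ) → ℝ}

lemma sub_const_mul (hH : IsFaddeev H) (hG : IsFaddeev G) (c : ℝ) :
    IsFaddeev fun n p ↦ H n p - c * G n p where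
  comp_perm n hn σ p hp := by rw [hH.comp_perm n hn σ p hp, hG.comp_perm n hn σ p hp]
  continuousOn := hH.continuousOn.sub (continuousOn_const.mul hG.continuousOn)
  grouping m p q₁ q₂ hp h₁ h₂ hsum hq := by
    rw [hH.grouping m p q₁ q₂ hp h₁ h₂ hsum hq, hG.grouping m p q₁ q₂ hp h₁ h₂ hsum hq]
    ring

variable (hH : IsFaddeev H)
include hH

lemma pair_comm {a b : ℝ} (ha : 0 ≤ a) (hb : 0 ≤ b) (hab : a + b = 1) :
    H 2 ![a, b] = H 2 ![b, a] := by
  rw [← hH.comp_perm 2 le_rfl (Equiv.swap 0 1) _ (isProbVec_pair ha hb hab)]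
  congr 1
  ext i
  fin_cases i <;> simp

lemma triple_rotate {a b c : ℝ} (ha : 0 ≤ a) (hb : 0 ≤ b) (hc : 0 ≤ c) (habc : a + b + c = 1) :
    H 3 ![a, b, c] = H 3 ![b, c, a] := by
  rw [← hH.comp_perm 3 (by norm_num) (finRotate 3) _ (isProbVec_triple ha hb hc habc)]
  congr 1
  ext i
  fin_cases i <;> rfl

lemma triple_grouping {a b c : ℝ} (ha : 0 ≤ a) (hb : 0 ≤ b) (hc : 0 ≤ c) (habc : a + b + c = 1)
    (hbc : 0 < b + c) :
    H 3 ![a, b, c] = H 2 ![a, b + c] + (b + c) * H 2 ![b / (b + c), c / (b + c)] := by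
  have htriple : ![a, b, c] = Fin.snoc (Fin.snoc ![a] b) c := by ext i; fin_cases i <;> rfl
  have hpair : ![a, b + c] = Fin.snoc ![a] (b + c) := by ext i; fin_cases i <;> rfl
  rw [htriple, hpair]
  exact hH.grouping 0 ![a] b c (by simpa using ha) hb hc (by simpa using habc) hbc

lemma pair_one_zero : H 2 ![1, 0] = 0 := by
  have hcomm : H 2 ![1, 0] = H 2 ![0, 1] := hH.pair_comm zero_le_one le_rfl (add_zero 1)
  have hrotate : H 3 ![0, 1 / 2, 1 / 2] = H 3 ![1 / 2, 1 / 2, 0] :=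
    hH.triple_rotate (by norm_num) (by norm_num) (by norm_num) (by norm_num)
  have hleft : H 3 ![0, 1 / 2, 1 / 2] = H 2 ![0, 1] + H 2 ![1 / 2, 1 / 2] := by
    simpa only [add_halves, div_one, one_mul] using
      hH.triple_grouping (a := 0) (b := 1 / 2) (c := 1 / 2) (by norm_num) (by norm_num)
        (by norm_num) (by norm_num) (by norm_num)
  have hright : H 3 ![1 / 2, 1 / 2, 0] = H 2 ![1 / 2, 1 / 2] + 1 / 2 * H 2 ![1, 0] := by
    simpa only [add_zero, zero_div, div_self (one_half_pos (α := ℝ)).ne'] using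
      hH.triple_grouping (a := 1 / 2) (b := 1 / 2) (c := 0) (by norm_num) (by norm_num)
        (by norm_num) (by norm_num) (by norm_num)
  linarith

lemma perspective_comm {x y : ℝ} (hx : 0 < x) (hy : 0 < y) :
    perspective (informationFunction H) x y = perspective (informationFunction H) y x := by
  have hsum : x / (x + y) + y / (x + y) = 1 := by field_simp
  rw [perspective_informationFunction H (by positivity),
    perspective_informationFunction H (by positivity), add_comm y x,
    hH.pair_comm (by positivity) (by positivity) hsum]

lemma mul_triple_eq_perspective_add {x y z : ℝ} (hx : 0 < x) (hy : 0 < y) (hz : 0 < z) :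
    (x + y + z) * H 3 ![x / (x + y + z), y / (x + y + z), z / (x + y + z)]
      = perspective (informationFunction H) x (y + z)
        + perspective (informationFunction H) y z := by
  have hxyz : x + y + z ≠ 0 := by positivity
  have hsum : x / (x + y + z) + y / (x + y + z) + z / (x + y + z) = 1 := by field_simp
  rw [hH.triple_grouping (by positivity) (by positivity) (by positivity) hsum (by positivity),
    perspective_informationFunction H (by positivity),
    perspective_informationFunction H (by positivity), ← add_div,
    div_div_div_cancel_right₀ hxyz, div_div_div_cancel_right₀ hxyz, ← add_assoc]
  field_simp

lemma perspective_cocycle {x y z : ℝ} (hx : 0 < x) (hy : 0 < y) (hz : 0 < z) :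
    perspective (informationFunction H) x y + perspective (informationFunction H) (x + y) z
      = perspective (informationFunction H) x (y + z)
        + perspective (informationFunction H) y z := by
  have hsum : z / (z + x + y) + x / (z + x + y) + y / (z + x + y) = 1 := by field_simp
  rw [add_comm, hH.perspective_comm (by positivity) hz, ← hH.mul_triple_eq_perspective_add hz hx hy,
    hH.triple_rotate (by positivity) (by positivity) (by positivity) hsum,
    show z + x + y = x + y + z by ring, hH.mul_triple_eq_perspective_add hx hy hz]

lemma pair_eq_zero (hhalf : H 2 ![1 / 2, 1 / 2] = 0) {a b : ℝ} (ha : 0 ≤ a) (hb : 0 ≤ b)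
    (hab : a + b = 1) : H 2 ![a, b] = 0 := by
  have hzero := eqOn_zero_of_perspective_cocycle
    (fun l m n hl hm hn ↦
      hH.perspective_cocycle (Nat.cast_pos.2 hl) (Nat.cast_pos.2 hm) (Nat.cast_pos.2 hn))
    hH.continuousOn (by simpa [informationFunction] using hH.pair_one_zero)
    (by rwa [informationFunction, sub_half])
  obtain rfl : b = 1 - a := by linarith
  exact hzero ⟨ha, by linarith⟩

lemma eq_zero_of_add_pos (hhalf : H 2 ![1 / 2, 1 / 2] = 0) {m : ℕ}
    (ih : ∀ p : Fin (m + 2) → ℝ, IsProbVec p → H (m + 2) p = 0) {r : Fin (m + 1) → ℝ} {a b : ℝ}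
    (hp : IsProbVec (Fin.snoc (Fin.snoc r a) b : Fin (m + 3) → ℝ)) (hab : 0 < a + b) :
    H (m + 3) (Fin.snoc (Fin.snoc r a) b) = 0 := by
  obtain ⟨hr, ha, hb, hsum⟩ := isProbVec_snoc_snoc_iff.1 hp
  have hpair : H 2 ![a / (a + b), b / (a + b)] = 0 :=
    hH.pair_eq_zero hhalf (by positivity) (by positivity) (by field_simp)
  rw [hH.grouping m r a b hr ha hb hsum hab, ih _ (isProbVec_snoc_add hp), hpair, mul_zero,
    add_zero]

theorem eq_zero (hhalf : H 2 ![1 / 2, 1 / 2] = 0) {n : ℕ} (hn : 2 ≤ n) {p : Fin n → ℝ}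
    (hp : IsProbVec p) : H n p = 0 := by
  induction n, hn using Nat.le_induction with
  | base =>
    have hpair : p = ![p 0, p 1] := by ext i; fin_cases i <;> rfl
    rw [hpair]
    exact hH.pair_eq_zero hhalf (hp.1 0) (hp.1 1) ((Fin.sum_univ_two p).symm.trans hp.2)
  | succ n hn ih =>
    obtain ⟨m, rfl⟩ := Nat.exists_eq_add_of_le' hn
    -- Grouping needs positive weight on the last two entries, so move a positive entry last.
    obtain ⟨i, hi⟩ := hp.exists_pos
    set σ := Equiv.swap i (Fin.last (m + 2))
    obtain ⟨r, a, b, hsnoc⟩ : ∃ (r : Fin (m + 1) → ℝ) (a b : ℝ),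
        p ∘ σ = Fin.snoc (Fin.snoc r a) b :=
      ⟨_, _, _, by rw [Fin.snoc_init_self, Fin.snoc_init_self]⟩
    have hpσ := hp.comp_perm σ
    have hb : p i = b := by simpa [σ] using congrFun hsnoc (Fin.last (m + 2))
    rw [← hH.comp_perm _ (by omega) σ p hp]
    rw [hsnoc] at hpσ ⊢
    have ha : 0 ≤ a := (isProbVec_snoc_snoc_iff.1 hpσ).2.1
    exact hH.eq_zero_of_add_pos hhalf (fun p hp ↦ ih hp) hpσ (by linarith)

theorem eq_mul_shannonEntropy {n : ℕ} (hn : 2 ≤ n) {p : Fin n → ℝ} (hp : IsProbVec p) :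
    H n p = H 2 ![1 / 2, 1 / 2] * shannonEntropy n p := by
  refine sub_eq_zero.1 ((hH.sub_const_mul isFaddeev_shannonEntropy (H 2 ![1 / 2, 1 / 2])).eq_zero
    ?_ hn hp)
  rw [shannonEntropy_half_half, mul_one, sub_self]

end IsFaddeev

/-- Faddeev's uniqueness theorem for the Shannon information: a permutation-invariant
family of functions on probability vectors, continuous and somewhere positive in the
two-outcome case, and satisfying the Faddeev grouping axiom, must be a positive multiple
of the Shannon entropy `−Σ pᵢ log₂ pᵢ`. -/
theorem stmt2 (H : ∀ n : ℕ, (Fin n → ℝ) → ℝ)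
    (hsymm : ∀ n, 2 ≤ n → ∀ σ : Equiv.Perm (Fin n), ∀ p : Fin n → ℝ,
      IsProbVec p → H n (p ∘ σ) = H n p)
    (hcont : ContinuousOn (fun x : ℝ => H 2 ![x, 1 - x]) (Set.Icc 0 1))
    (hpos : ∃ x ∈ Set.Icc (0 : ℝ) 1, 0 < H 2 ![x, 1 - x])
    (hgroup : ∀ (m : ℕ) (p : Fin (m + 1) → ℝ) (q₁ q₂ : ℝ),
      (∀ i, 0 ≤ p i) → 0 ≤ q₁ → 0 ≤ q₂ → (∑ i, p i) + q₁ + q₂ = 1 → 0 < q₁ + q₂ →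
      H (m + 3) (Fin.snoc (Fin.snoc p q₁) q₂)
        = H (m + 2) (Fin.snoc p (q₁ + q₂))
          + (q₁ + q₂) * H 2 ![q₁ / (q₁ + q₂), q₂ / (q₁ + q₂)]) :
    ∃ K : ℝ, 0 < K ∧ ∀ n, 2 ≤ n → ∀ p : Fin n → ℝ, IsProbVec p →
      H n p = -K * ∑ i, p i * Real.logb 2 (p i) := by
  have hH : IsFaddeev H := ⟨hsymm, hcont, hgroup⟩
  refine ⟨H 2 ![1 / 2, 1 / 2], ?_, fun n hn p hp ↦ ?_⟩
  · obtain ⟨x, hx, hHx⟩ := hpos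
    have hvec : IsProbVec ![x, 1 - x] :=
      isProbVec_pair hx.1 (sub_nonneg.2 hx.2) (add_sub_cancel x 1)
    rw [hH.eq_mul_shannonEntropy le_rfl hvec] at hHx
    exact pos_of_mul_pos_left hHx (shannonEntropy_nonneg hvec)
  · rw [hH.eq_mul_shannonEntropy hn hp, shannonEntropy, neg_mul_comm]
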